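/- arXiv:1810.05317 — 3 statements merged into one kernel-verified Lean document; each statement's English description precedes it below -/
import Mathlib

section
/- For every K ≥ 0 there exists a positive integer n such that there exist at least K pairwise non-isomorphic finite simple graphs, each of which is independence equivalent to the path P_{2n} on 2n vertices. -/
open SimpleGraph Polynomial Finset

/-- The number of independent sets of size `k` in the graph `G`. -/
noncomputable def indepCount {V : Type*} [Fintype V] (G : SimpleGraph V) (k : ℕ) : ℕ :=
  Nat.card {s : Finset V // s.card = k ∧ ∀ u ∈ s, ∀ v ∈ s, ¬ G.Adj u v}

/-- The graph `D_n`: a triangle on the vertices `0, 1, 2` together with the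
pendant path `2 - 3 - ⋯ - (n-1)`. -/
def dGraph (n : ℕ) : SimpleGraph (Fin n) :=
  SimpleGraph.fromRel (fun u v =>
    (u.val = 0 ∧ v.val = 1) ∨ (u.val = 0 ∧ v.val = 2) ∨ (u.val = 1 ∧ v.val = 2) ∨
    (2 ≤ u.val ∧ v.val = u.val + 1))

section IndependencePolynomial

variable {V W : Type*}

/-- The finite vertex set `s` spans no edge of `G`. -/
def SpansNoEdge (G : SimpleGraph V) (s : Finset V) : Prop :=
  ∀ u ∈ s, ∀ v ∈ s, ¬ G.Adj u v

/-- The independence polynomial of the subgraph of `G` induced on the finite vertex set `S`. -/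
noncomputable def indepPolyOn (G : SimpleGraph V) (S : Finset V) : ℕ[X] :=
  open Classical in
  ∑ s ∈ S.powerset with SpansNoEdge G s, X ^ s.card

theorem coeff_indepPolyOn_univ [Fintype V] (G : SimpleGraph V) (k : ℕ) :
    (indepPolyOn G univ).coeff k = indepCount G k := by
  classical
  simp only [indepPolyOn, indepCount, finsetSum_coeff, coeff_X_pow, Nat.card_eq_fintype_card,
    Fintype.card_subtype, powerset_univ, ← Finset.sum_filter, Finset.filter_filter]
  rw [Finset.sum_const, smul_eq_mul, mul_one]
  congr 1
  ext s
  simp only [mem_filter, mem_univ, true_and]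
  rw [and_comm, eq_comm, SpansNoEdge]

theorem indepPolyOn_map {G : SimpleGraph V} {H : SimpleGraph W} (f : V ↪ W) {S : Finset V}
    (h : ∀ u ∈ S, ∀ v ∈ S, H.Adj (f u) (f v) ↔ G.Adj u v) :
    indepPolyOn H (S.map f) = indepPolyOn G S := by
  classical
  symm
  refine Finset.sum_bij (fun s _ => s.map f) ?_ ?_ ?_ ?_
  · intro s hs
    simp only [mem_filter, mem_powerset] at hs ⊢
    refine ⟨map_subset_map.2 hs.1, ?_⟩
    simp only [SpansNoEdge, mem_map, forall_exists_index, and_imp, forall_apply_eq_imp_iff₂]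
    intro u hu v hv
    rw [h u (hs.1 hu) v (hs.1 hv)]
    exact hs.2 u hu v hv
  · intro s _ t _ hst
    exact map_injective f hst
  · intro t ht
    simp only [mem_filter, mem_powerset] at ht
    obtain ⟨s, hs, rfl⟩ := subset_map_iff.1 ht.1
    refine ⟨s, ?_, rfl⟩
    simp only [mem_filter, mem_powerset]
    refine ⟨hs, fun u hu v hv huv => ?_⟩
    exact ht.2 _ (mem_map_of_mem f hu) _ (mem_map_of_mem f hv) ((h u (hs hu) v (hs hv)).2 huv)
  · intro s _
    rw [card_map]

theorem indepPolyOn_congr {G H : SimpleGraph V} {S : Finset V}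
    (h : ∀ u ∈ S, ∀ v ∈ S, H.Adj u v ↔ G.Adj u v) : indepPolyOn H S = indepPolyOn G S := by
  simpa using indepPolyOn_map (Function.Embedding.refl V) h

theorem indepPolyOn_univ_of_iso [Fintype V] [Fintype W] {G : SimpleGraph V} {H : SimpleGraph W}
    (e : G ≃g H) : indepPolyOn G univ = indepPolyOn H univ := by
  have h := indepPolyOn_map (G := G) (H := H) (S := univ) e.toEquiv.toEmbedding
    fun u _ v _ => e.map_adj_iff
  rw [← h, map_univ_equiv]

/-- Vertex deletion: an independent set either avoids `v`, or contains `v` and none of its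
neighbours. -/
theorem indepPolyOn_eq_add [DecidableEq V] (G : SimpleGraph V) {S A B : Finset V} {v : V}
    (hS : S = insert v A) (hv : v ∉ A) (hB : ∀ u, u ∈ B ↔ u ∈ A ∧ ¬ G.Adj v u) :
    indepPolyOn G S = indepPolyOn G A + X * indepPolyOn G B := by
  classical
  subst hS
  rw [indepPolyOn, sum_filter, sum_powerset_insert hv]
  refine congr_arg₂ (· + ·) (sum_filter _ _).symm ((sum_filter _ _).symm.trans ?_)
  rw [indepPolyOn, mul_sum]
  have hvB : B ⊆ A := fun u hu => ((hB u).1 hu).1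
  refine sum_congr ?_ ?_
  · ext s
    simp only [mem_filter, mem_powerset]
    simp only [SpansNoEdge, mem_insert, forall_eq_or_imp, G.irrefl, not_false_eq_true, true_and]
    constructor
    · rintro ⟨hs, hvs, hss⟩
      exact ⟨fun u hu => (hB u).2 ⟨hs hu, hvs u hu⟩, fun u hu => (hss u hu).2⟩
    · rintro ⟨hs, hss⟩
      have hadj : ∀ u ∈ s, ¬ G.Adj v u := fun u hu => ((hB u).1 (hs hu)).2
      exact ⟨hs.trans hvB, hadj, fun u hu => ⟨fun huv => hadj u hu huv.symm, hss u hu⟩⟩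
  · intro s hs
    have hvs : v ∉ s := fun h => hv (hvB (mem_powerset.1 (mem_filter.1 hs).1 h))
    rw [card_insert_of_notMem hvs, pow_succ']

theorem indepPolyOn_sum_univ [Fintype V] [Fintype W] (G : SimpleGraph V) (H : SimpleGraph W) :
    indepPolyOn (G ⊕g H) univ = indepPolyOn G univ * indepPolyOn H univ := by
  classical
  simp only [indepPolyOn, powerset_univ]
  rw [sum_mul_sum, ← sum_product']
  refine sum_bij' (fun s _ => (s.toLeft, s.toRight)) (fun p _ => p.1.disjSum p.2) ?_ ?_ ?_ ?_ ?_
  · intro s hs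
    simp only [mem_product, mem_filter, mem_univ, true_and] at hs ⊢
    simp only [SpansNoEdge, mem_toLeft, mem_toRight] at hs ⊢
    exact ⟨fun u hu v hv => hs _ hu _ hv, fun u hu v hv => hs _ hu _ hv⟩
  · rintro ⟨s, t⟩ hst
    simp only [mem_product, mem_filter, mem_univ, true_and] at hst ⊢
    simp only [SpansNoEdge] at hst ⊢
    rintro (u | u) hu (v | v) hv <;> simp at hu hv ⊢
    · exact hst.1 u hu v hv
    · exact hst.2 u hu v hv
  · intro s _
    exact toLeft_disjSum_toRight
  · rintro ⟨s, t⟩ _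
    simp
  · intro s _
    rw [← pow_add, card_toLeft_add_card_toRight]

end IndependencePolynomial

section Paths

/-- The one-way infinite path, whose restriction to `range n` is the path on `n` vertices. -/
def rayGraph : SimpleGraph ℕ where
  Adj u v := u + 1 = v ∨ v + 1 = u
  symm := ⟨fun _ _ h => h.symm⟩
  loopless := ⟨fun _ h => by omega⟩

/-- The one-way infinite path with the additional edge `n, n + 2`. Its restriction to
`range (n + 3)` is a triangle with a pendant path. -/
def rayTriangleGraph (n : ℕ) : SimpleGraph ℕ where
  Adj u v := u + 1 = v ∨ v + 1 = u ∨ (u = n ∧ v = n + 2) ∨ (v = n ∧ u = n + 2)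
  symm := ⟨fun _ _ h => by omega⟩
  loopless := ⟨fun _ h => by omega⟩

/-- The independence polynomial of the path on `n` vertices. -/
noncomputable def pathPoly (n : ℕ) : ℕ[X] := indepPolyOn rayGraph (range n)

theorem indepPolyOn_comap_val (G : SimpleGraph ℕ) (n : ℕ) :
    indepPolyOn (G.comap (Fin.val : Fin n → ℕ)) univ = indepPolyOn G (range n) := by
  have h := indepPolyOn_map (G := G.comap (Fin.val : Fin n → ℕ)) (H := G) (S := univ)
    Fin.valEmbedding fun u _ v _ => Iff.rfl
  rw [← h]
  congr 1
  ext u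
  simp

theorem indepPolyOn_pathGraph (n : ℕ) : indepPolyOn (pathGraph n) univ = pathPoly n := by
  rw [pathPoly, ← indepPolyOn_comap_val]
  refine indepPolyOn_congr fun u _ v _ => ?_
  rw [pathGraph_adj]
  rfl

theorem pathPoly_zero : pathPoly 0 = 1 := by
  simp [pathPoly, indepPolyOn, Finset.filter_singleton,
    show SpansNoEdge rayGraph ∅ from fun u hu => absurd hu (notMem_empty u)]

theorem pathPoly_one : pathPoly 1 = 1 + X := by
  rw [pathPoly, indepPolyOn_eq_add (A := range 0) (B := range 0) (v := 0) rayGraph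
    (by simp) (by simp) (by simp), ← pathPoly, pathPoly_zero, mul_one]

theorem pathPoly_add_two (n : ℕ) : pathPoly (n + 2) = pathPoly (n + 1) + X * pathPoly n := by
  refine indepPolyOn_eq_add (v := n + 1) rayGraph range_add_one (by simp) fun u => ?_
  simp only [mem_range, rayGraph]
  omega

theorem pathPoly_add_add_three (a b : ℕ) :
    pathPoly (a + b + 3) = pathPoly (a + 1) * pathPoly (b + 1) + X * (pathPoly a * pathPoly b) := by
  induction a generalizing b with
  | zero =>
    rw [pathPoly_zero, zero_add, zero_add, pathPoly_one, pathPoly_add_two (b + 1),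
      pathPoly_add_two b]
    ring
  | succ a ih =>
    have h := ih (b + 1)
    rw [show a + (b + 1) + 3 = a + 1 + b + 3 by ring] at h
    rw [h, pathPoly_add_two b, pathPoly_add_two a]
    ring

theorem indepPolyOn_rayTriangleGraph (n : ℕ) :
    indepPolyOn (rayTriangleGraph n) (range (n + 3)) = pathPoly (n + 2) + X * pathPoly n := by
  rw [indepPolyOn_eq_add (v := n + 2) (A := range (n + 2)) (B := range n) (rayTriangleGraph n)
    range_add_one (by simp) (fun u => by
      simp only [mem_range, rayTriangleGraph, and_true]
      omega)]
  refine congr_arg₂ (· + X * ·) ?_ ?_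
  all_goals
    refine indepPolyOn_congr fun u hu v hv => ?_
    simp only [mem_range, rayTriangleGraph, rayGraph] at *
    omega

theorem pathPoly_two_mul_add_four (n : ℕ) :
    pathPoly (2 * n + 4) =
      pathPoly (n + 1) * indepPolyOn (rayTriangleGraph n) (range (n + 3)) := by
  rw [indepPolyOn_rayTriangleGraph, show 2 * n + 4 = n + (n + 1) + 3 by ring,
    pathPoly_add_add_three]
  ring

end Paths

section Triangles

variable {V W : Type*}

/-- The vertex `v` lies on a triangle of `G`. -/
def InTriangle (G : SimpleGraph V) (v : V) : Prop :=
  ∃ a b, G.Adj v a ∧ G.Adj v b ∧ G.Adj a b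

/-- The number of vertices of `G` lying on a triangle. -/
noncomputable def triangleVertexCount (G : SimpleGraph V) : ℕ :=
  Nat.card {v // InTriangle G v}

theorem InTriangle.map {G : SimpleGraph V} {H : SimpleGraph W} (f : G →g H) {v : V}
    (h : InTriangle G v) : InTriangle H (f v) := by
  obtain ⟨a, b, hva, hvb, hab⟩ := h
  exact ⟨f a, f b, f.map_adj hva, f.map_adj hvb, f.map_adj hab⟩

theorem triangleVertexCount_of_iso {G : SimpleGraph V} {H : SimpleGraph W} (e : G ≃g H) :
    triangleVertexCount G = triangleVertexCount H :=
  Nat.card_congr <| e.toEquiv.subtypeEquiv fun v =>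
    ⟨InTriangle.map e.toHom, fun h => by simpa using InTriangle.map e.symm.toHom h⟩

theorem triangleVertexCount_sum [Finite V] [Finite W] (G : SimpleGraph V) (H : SimpleGraph W) :
    triangleVertexCount (G ⊕g H) = triangleVertexCount G + triangleVertexCount H := by
  rw [triangleVertexCount, Nat.card_congr Equiv.subtypeSum, Nat.card_sum]
  congr 1
  all_goals
    refine Nat.card_congr (Equiv.subtypeEquivRight fun v => ?_)
    simp [InTriangle]

theorem triangleVertexCount_pathGraph (n : ℕ) : triangleVertexCount (pathGraph n) = 0 := by
  have : IsEmpty {v // InTriangle (pathGraph n) v} := by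
    refine ⟨fun ⟨v, a, b, hva, hvb, hab⟩ => ?_⟩
    rw [pathGraph_adj] at hva hvb hab
    omega
  exact Nat.card_of_isEmpty

theorem triangleVertexCount_rayTriangleGraph_pos (n : ℕ) :
    0 < triangleVertexCount ((rayTriangleGraph n).comap (Fin.val : Fin (n + 3) → ℕ)) := by
  have : Nonempty {v // InTriangle ((rayTriangleGraph n).comap (Fin.val : Fin (n + 3) → ℕ)) v} :=
    ⟨⟨n, by omega⟩, ⟨n + 1, by omega⟩, ⟨n + 2, by omega⟩, by
      simp [rayTriangleGraph]⟩
  exact Nat.card_pos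

end Triangles

theorem exists_family_indepPolyOn_eq_pathPoly (K : ℕ) :
    ∃ n : ℕ, ∃ Gs : Fin K → SimpleGraph (Fin (2 * (n + 1))),
      (∀ i, indepPolyOn (Gs i) univ = pathPoly (2 * (n + 1))) ∧
      Function.Injective fun i => triangleVertexCount (Gs i) := by
  induction K with
  | zero => exact ⟨0, fun _ => pathGraph _, fun i => i.elim0, fun i => i.elim0⟩
  | succ K ih =>
    obtain ⟨n, Gs, hpoly, hinj⟩ := ih
    let T := (rayTriangleGraph (2 * n + 1)).comap (Fin.val : Fin (2 * n + 1 + 3) → ℕ)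
    have e : Fin (2 * (n + 1)) ⊕ Fin (2 * n + 1 + 3) ≃ Fin (2 * (2 * n + 2 + 1)) :=
      Fintype.equivOfCardEq (by simp; ring)
    let Hs : Fin K → SimpleGraph (Fin (2 * (2 * n + 2 + 1))) := fun i =>
      (Gs i ⊕g T).map e
    have hcount (i : Fin K) :
        triangleVertexCount (Hs i) = triangleVertexCount (Gs i) + triangleVertexCount T := by
      rw [← triangleVertexCount_of_iso (Iso.map e (Gs i ⊕g T)), triangleVertexCount_sum]
    have hT : 0 < triangleVertexCount T := triangleVertexCount_rayTriangleGraph_pos _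
    refine ⟨2 * n + 2, Fin.cons (pathGraph _) Hs, fun i => ?_, fun i j hij => ?_⟩
    · cases i using Fin.cases with
      | zero => exact indepPolyOn_pathGraph _
      | succ i =>
        rw [Fin.cons_succ, ← indepPolyOn_univ_of_iso (Iso.map e (Gs i ⊕g T)),
          indepPolyOn_sum_univ, hpoly, indepPolyOn_comap_val,
          show 2 * (2 * n + 2 + 1) = 2 * (2 * n + 1) + 4 by ring, pathPoly_two_mul_add_four]
        rfl
    · cases i using Fin.cases <;> cases j using Fin.cases <;>
        simp only [Fin.cons_zero, Fin.cons_succ, triangleVertexCount_pathGraph, hcount] at hij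
      · rfl
      · omega
      · omega
      · exact congrArg Fin.succ (hinj (Nat.add_right_cancel hij))

theorem evenPath_class_unbounded (K : ℕ) :
    ∃ n : ℕ, 1 ≤ n ∧ ∃ Gs : Fin K → SimpleGraph (Fin (2 * n)),
      (∀ i, ∀ k, indepCount (Gs i) k = indepCount (SimpleGraph.pathGraph (2 * n)) k) ∧
      (∀ i j, i ≠ j → IsEmpty (Gs i ≃g Gs j)) := by
  obtain ⟨n, Gs, hpoly, hinj⟩ := exists_family_indepPolyOn_eq_pathPoly K
  refine ⟨n + 1, Nat.le_add_left 1 n, Gs, fun i k => ?_, fun i j hij => ⟨fun e => ?_⟩⟩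
  · rw [← coeff_indepPolyOn_univ, ← coeff_indepPolyOn_univ, hpoly, indepPolyOn_pathGraph]
  · exact hij (hinj (triangleVertexCount_of_iso e))
end

section
/- For every n ≥ 3, if G is a connected finite simple graph such that for every k the number of independent sets of size k in G equals the number of independent sets of size k in the cycle C_n, then G is isomorphic to C_n or G is isomorphic to D_n. -/
open SimpleGraph Polynomial Finset

theorem indepCount_eq_card_filter {V : Type*} [Fintype V] [DecidableEq V] (G : SimpleGraph V)
    [DecidableRel G.Adj] (k : ℕ) :
    indepCount G k = #{s : Finset V | s.card = k ∧ ∀ u ∈ s, ∀ v ∈ s, ¬ G.Adj u v} := by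
  rw [indepCount, Nat.card_eq_fintype_card, Fintype.card_subtype]

theorem indepCount_one {V : Type*} [Fintype V] (G : SimpleGraph V) :
    indepCount G 1 = Fintype.card V := by
  classical
  rw [indepCount_eq_card_filter, ← Finset.card_univ,
    ← Finset.card_map ⟨singleton, Finset.singleton_injective⟩ (s := (univ : Finset V))]
  refine congrArg Finset.card ?_
  ext s
  simp only [mem_filter, mem_univ, true_and, Finset.mem_map, Function.Embedding.coeFn_mk,
    Finset.card_eq_one]
  constructor
  · rintro ⟨⟨a, rfl⟩, -⟩
    exact ⟨a, rfl⟩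
  · rintro ⟨a, rfl⟩
    exact ⟨⟨a, rfl⟩, by simp⟩

theorem two_mul_indepCount_two {V : Type*} [Fintype V] [DecidableEq V] (G : SimpleGraph V)
    [DecidableRel G.Adj] :
    2 * indepCount G 2 = #{p : V × V | p.1 ≠ p.2 ∧ ¬ G.Adj p.1 p.2} := by
  rw [indepCount_eq_card_filter, mul_comm, ← smul_eq_mul, ← Finset.sum_const]
  rw [Finset.card_eq_sum_card_fiberwise (f := fun p : V × V => ({p.1, p.2} : Finset V))
    (t := {s : Finset V | s.card = 2 ∧ ∀ u ∈ s, ∀ v ∈ s, ¬ G.Adj u v})]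
  · refine Finset.sum_congr rfl fun s hs => ?_
    simp only [mem_filter, mem_univ, true_and, Finset.card_eq_two] at hs
    obtain ⟨⟨x, y, hxy, rfl⟩, hs⟩ := hs
    have : ({p ∈ ({p : V × V | p.1 ≠ p.2 ∧ ¬ G.Adj p.1 p.2} : Finset (V × V)) |
        ({p.1, p.2} : Finset V) = {x, y}}) = {(x, y), (y, x)} := by
      ext ⟨a, b⟩
      simp only [mem_filter, mem_univ, true_and, Finset.mem_insert, Finset.mem_singleton,
        Prod.mk.injEq] at hs ⊢
      constructor
      · rintro ⟨⟨hab, -⟩, h⟩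
        have ha : a ∈ ({x, y} : Finset V) := by simp [← h]
        have hb : b ∈ ({x, y} : Finset V) := by simp [← h]
        simp only [Finset.mem_insert, Finset.mem_singleton] at ha hb
        grind
      · rintro (h | h) <;> obtain ⟨rfl, rfl⟩ := h <;>
          refine ⟨⟨?_, hs _ ?_ _ ?_⟩, ?_⟩ <;> grind
    rw [this, Finset.card_pair (by grind)]
  · rintro ⟨a, b⟩ h
    simp only [coe_filter, Finset.mem_univ, true_and, Set.mem_ofPred_eq] at h ⊢
    exact ⟨Finset.card_pair h.1, by simp [h.2, G.adj_comm b a]⟩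

theorem six_mul_indepCount_three {V : Type*} [Fintype V] [DecidableEq V] (G : SimpleGraph V)
    [DecidableRel G.Adj] :
    6 * indepCount G 3 = #{p : V × V × V | (p.1 ≠ p.2.1 ∧ ¬ G.Adj p.1 p.2.1) ∧
      (p.2.1 ≠ p.2.2 ∧ ¬ G.Adj p.2.1 p.2.2) ∧ (p.2.2 ≠ p.1 ∧ ¬ G.Adj p.2.2 p.1)} := by
  rw [indepCount_eq_card_filter, mul_comm, ← smul_eq_mul, ← Finset.sum_const]
  rw [Finset.card_eq_sum_card_fiberwise
    (f := fun p : V × V × V => ({p.1, p.2.1, p.2.2} : Finset V))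
    (t := {s : Finset V | s.card = 3 ∧ ∀ u ∈ s, ∀ v ∈ s, ¬ G.Adj u v})]
  · refine Finset.sum_congr rfl fun s hs => ?_
    simp only [mem_filter, mem_univ, true_and, Finset.card_eq_three] at hs
    obtain ⟨⟨x, y, z, hxy, hxz, hyz, rfl⟩, hs⟩ := hs
    have : ({p ∈ ({p : V × V × V | (p.1 ≠ p.2.1 ∧ ¬ G.Adj p.1 p.2.1) ∧
        (p.2.1 ≠ p.2.2 ∧ ¬ G.Adj p.2.1 p.2.2) ∧
        (p.2.2 ≠ p.1 ∧ ¬ G.Adj p.2.2 p.1)} : Finset (V × V × V)) |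
        ({p.1, p.2.1, p.2.2} : Finset V) = {x, y, z}}) =
        {(x, y, z), (x, z, y), (y, x, z), (y, z, x), (z, x, y), (z, y, x)} := by
      ext ⟨a, b, c⟩
      simp only [mem_filter, mem_univ, true_and, Finset.mem_insert, Finset.mem_singleton,
        Prod.mk.injEq] at hs ⊢
      constructor
      · rintro ⟨⟨⟨hab, -⟩, ⟨hbc, -⟩, hca, -⟩, h⟩
        have ha : a ∈ ({x, y, z} : Finset V) := by simp [← h]
        have hb : b ∈ ({x, y, z} : Finset V) := by simp [← h]
        have hc : c ∈ ({x, y, z} : Finset V) := by simp [← h]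
        simp only [Finset.mem_insert, Finset.mem_singleton] at ha hb hc
        grind
      · rintro (h | h | h | h | h | h) <;> obtain ⟨rfl, rfl, rfl⟩ := h <;>
          refine ⟨⟨⟨?_, hs _ ?_ _ ?_⟩, ⟨?_, hs _ ?_ _ ?_⟩, ?_, hs _ ?_ _ ?_⟩, ?_⟩ <;> grind
    rw [this]
    simp [Finset.card_insert_of_notMem, hxy, hxz, hyz, hxy.symm, hxz.symm, hyz.symm]
  · rintro ⟨a, b, c⟩ h
    simp only [coe_filter, Finset.mem_univ, true_and, Set.mem_ofPred_eq] at h ⊢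
    refine ⟨Finset.card_eq_three.2 ⟨a, b, c, h.1.1, h.2.2.1.symm, h.2.1.1, rfl⟩, ?_⟩
    simp [h.1.2, h.2.1.2, h.2.2.2, G.adj_comm b a, G.adj_comm a c, G.adj_comm c b]

theorem two_mul_indepCount_two_eq_sub {V : Type*} [Fintype V] (G : SimpleGraph V)
    [DecidableRel G.Adj] :
    (2 * indepCount G 2 : ℤ) =
      (Fintype.card V : ℤ) ^ 2 - Fintype.card V - ∑ v, (G.degree v : ℤ) := by
  classical
  have key : ∀ a b : V, (if a ≠ b ∧ ¬ G.Adj a b then 1 else 0 : ℤ) =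
      1 - (if a = b then 1 else 0) - (if G.Adj a b then 1 else 0) := by
    intro a b
    by_cases hab : a = b
    · subst hab; simp
    · simp only [hab]; split_ifs <;> simp_all
  have hdeg : ∀ a, ∑ b, (if G.Adj a b then 1 else 0 : ℤ) = G.degree a := by
    intro a
    rw [Finset.sum_boole, ← G.card_neighborFinset_eq_degree, G.neighborFinset_eq_filter]
  have h := congrArg (Nat.cast : ℕ → ℤ) (two_mul_indepCount_two G)
  push_cast at h
  rw [h, Finset.card_filter, Fintype.sum_prod_type]
  push_cast
  simp only [key, Finset.sum_sub_distrib, hdeg]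
  simp [sq]

/-- The ordered triples of pairwise adjacent vertices of `G`. -/
def orderedTriangles {V : Type*} [Fintype V] (G : SimpleGraph V) [DecidableRel G.Adj] :
    Finset (V × V × V) :=
  {p : V × V × V | G.Adj p.1 p.2.1 ∧ G.Adj p.2.1 p.2.2 ∧ G.Adj p.2.2 p.1}

theorem six_mul_indepCount_three_add_card_orderedTriangles {V : Type*} [Fintype V] (G : SimpleGraph V)
    [DecidableRel G.Adj] :
    (6 * indepCount G 3 : ℤ) + #(orderedTriangles G) =
      (Fintype.card V : ℤ) ^ 3 - 3 * Fintype.card V * ∑ v, ((G.degree v : ℤ) + 1)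
      + 3 * ∑ v, ((G.degree v : ℤ) + 1) ^ 2 - Fintype.card V - 3 * ∑ v, (G.degree v : ℤ) := by
  classical
  let E : V → V → ℤ := fun a b => if a = b ∨ G.Adj a b then 1 else 0
  have symm : ∀ a b, E a b = E b a := fun a b => by simp only [E, eq_comm, G.adj_comm]
  have hdeg : ∀ a, ∑ b, (if G.Adj a b then 1 else 0 : ℤ) = G.degree a := by
    intro a
    rw [Finset.sum_boole, ← G.card_neighborFinset_eq_degree, G.neighborFinset_eq_filter]
  have hE : ∀ a, ∑ b, E a b = (G.degree a : ℤ) + 1 := by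
    intro a
    have : ∀ b, E a b = (if G.Adj a b then 1 else 0) + (if a = b then 1 else 0) := by
      intro b
      by_cases hab : a = b
      · subst hab; simp [E]
      · simp [E, hab]
    simp only [this, Finset.sum_add_distrib, hdeg]
    simp
  have hE' : ∀ a, ∑ b, E b a = (G.degree a : ℤ) + 1 := by
    intro a; simp only [symm _ a, hE]
  have key : ∀ a b c : V, (if (a ≠ b ∧ ¬ G.Adj a b) ∧ (b ≠ c ∧ ¬ G.Adj b c) ∧
      (c ≠ a ∧ ¬ G.Adj c a) then 1 else 0 : ℤ) +
      (if G.Adj a b ∧ G.Adj b c ∧ G.Adj c a then 1 else 0) =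
      1 - E a b - E b c - E c a + E a b * E a c + E b a * E b c + E c a * E c b
      - (if a = b then if a = c then 1 else 0 else 0)
      - (if a = b then if G.Adj a c then 1 else 0 else 0)
      - (if b = c then if G.Adj b a then 1 else 0 else 0)
      - (if c = a then if G.Adj c b then 1 else 0 else 0) := by
    intro a b c
    by_cases hab : a = b
    · subst hab
      by_cases hac : a = c
      · subst hac; simp [E]
      · by_cases h : G.Adj a c <;> simp [E, hac, h, Ne.symm hac, G.adj_comm c a]
    · by_cases hac : a = c
      · subst hac
        by_cases h : G.Adj a b <;> simp [E, hab, h, Ne.symm hab, G.adj_comm b a]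
      · by_cases hbc : b = c
        · subst hbc
          by_cases h : G.Adj a b <;> simp [E, hab, h, Ne.symm hab, G.adj_comm b a]
        · by_cases h : G.Adj a b <;> by_cases h' : G.Adj a c <;> by_cases h'' : G.Adj b c <;>
            simp [E, hab, hac, hbc, Ne.symm hab, Ne.symm hac, Ne.symm hbc, h, h', h'',
              G.adj_comm b a, G.adj_comm c a, G.adj_comm c b]
  have h := congrArg (Nat.cast : ℕ → ℤ) (six_mul_indepCount_three G)
  push_cast at h
  rw [h, orderedTriangles, Finset.card_filter, Finset.card_filter]
  push_cast
  rw [← Finset.sum_add_distrib]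
  simp only [Fintype.sum_prod_type, key, Finset.sum_sub_distrib, Finset.sum_add_distrib]
  have e1 : ∑ a, ∑ b, ∑ c, E a b * E a c = ∑ v, ((G.degree v : ℤ) + 1) ^ 2 := by
    simp only [← Finset.mul_sum, ← Finset.sum_mul, hE, sq]
  have e2 : ∑ a, ∑ b, ∑ c, E b a * E b c = ∑ v, ((G.degree v : ℤ) + 1) ^ 2 := by
    rw [Finset.sum_comm]
    simp only [← Finset.mul_sum, ← Finset.sum_mul, hE, sq]
  have e3 : ∑ a, ∑ b, ∑ c, E c a * E c b = ∑ v, ((G.degree v : ℤ) + 1) ^ 2 := by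
    simp only [fun a => Finset.sum_comm (s := univ) (t := univ) (f := fun b c => E c a * E c b)]
    rw [Finset.sum_comm]
    simp only [← Finset.mul_sum, ← Finset.sum_mul, hE, sq]
  have e4 : ∑ a, ∑ b, ∑ c : V, (if c = a then if G.Adj c b then 1 else 0 else 0 : ℤ) =
      ∑ v, (G.degree v : ℤ) := by
    simp [hdeg]
  have e5 : ∑ a, ∑ b, ∑ c : V, (if b = c then if G.Adj b a then 1 else 0 else 0 : ℤ) =
      ∑ v, (G.degree v : ℤ) := by
    simp [G.adj_comm, hdeg]
  have e6 : ∑ a, ∑ b, ∑ c : V, (if a = b then if G.Adj a c then 1 else 0 else 0 : ℤ) =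
      ∑ v, (G.degree v : ℤ) := by
    rw [← Finset.sum_congr rfl fun a _ => hdeg a]
    refine Finset.sum_congr rfl fun a _ => ?_
    rw [Finset.sum_comm]
    simp
  have e7 : ∑ a, ∑ b, ∑ c : V, (if a = b then if a = c then 1 else 0 else 0 : ℤ) =
      Fintype.card V := by
    have : ∀ a : V, ∑ b, ∑ c : V, (if a = b then if a = c then 1 else 0 else 0 : ℤ) = 1 := by
      intro a
      rw [Finset.sum_comm]
      simp
    simp only [this, Finset.sum_const, nsmul_eq_mul, Finset.card_univ, mul_one]
  have e8 : ∑ a, ∑ b, ∑ _c : V, E a b = Fintype.card V * ∑ v, ((G.degree v : ℤ) + 1) := by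
    simp only [Finset.sum_const, nsmul_eq_mul, ← Finset.mul_sum, hE, Finset.card_univ]
  have e9 : ∑ _a : V, ∑ b, ∑ c : V, E b c = Fintype.card V * ∑ v, ((G.degree v : ℤ) + 1) := by
    simp only [Finset.sum_const, nsmul_eq_mul, hE, Finset.card_univ]
  have e10 : ∑ a : V, ∑ _b : V, ∑ c : V, E c a =
      Fintype.card V * ∑ v, ((G.degree v : ℤ) + 1) := by
    simp only [Finset.sum_const, nsmul_eq_mul, ← Finset.mul_sum, hE', Finset.card_univ]
  rw [e1, e2, e3, e4, e5, e6, e7, e8, e9, e10]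
  simp only [Finset.sum_add_distrib, Finset.sum_const, nsmul_eq_mul, Finset.card_univ]
  ring

theorem connected_deleteEdges_of_triangle {V : Type*} {G : SimpleGraph V} (hG : G.Connected)
    {x y z : V} (hxy : G.Adj x y) (hyz : G.Adj y z) (hzx : G.Adj z x) :
    (G.deleteEdges {s(x, y)}).Connected := by
  refine hG.connected_delete_edge_of_not_isBridge ?_
  rw [isBridge_iff, not_not]
  have hxz' : (G.deleteEdges {s(x, y)}).Adj x z := by
    simp [deleteEdges_adj, hzx.symm, hxy.ne, hyz.ne.symm]
  have hzy' : (G.deleteEdges {s(x, y)}).Adj z y := by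
    simp [deleteEdges_adj, hyz.symm, hxy.ne.symm, hzx.ne]
  exact hxz'.reachable.trans hzy'.reachable

/-- In a connected graph with at most as many edges as vertices, every triangle uses every edge
that lies on some triangle. -/
theorem edge_mem_triangle {V : Type*} [Fintype V] {G : SimpleGraph V} (hG : G.Connected)
    (hcard : Nat.card G.edgeSet ≤ Nat.card V)
    {x y z : V} (hxy : G.Adj x y) (hyz : G.Adj y z) (hzx : G.Adj z x)
    {a b c : V} (hab : G.Adj a b) (hbc : G.Adj b c) (hca : G.Adj c a) :
    s(a, b) = s(x, y) ∨ s(b, c) = s(x, y) ∨ s(c, a) = s(x, y) := by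
  by_contra! hne
  have h₁ := connected_deleteEdges_of_triangle hG hxy hyz hzx
  have hadj : ∀ {u v}, G.Adj u v → s(u, v) ≠ s(x, y) → (G.deleteEdges {s(x, y)}).Adj u v :=
    fun h h' => by rw [deleteEdges_adj]; exact ⟨h, h'⟩
  have h₂ := connected_deleteEdges_of_triangle h₁ (hadj hab hne.1) (hadj hbc hne.2.1)
    (hadj hca hne.2.2)
  have h₃ := h₂.card_vert_le_card_edgeSet_add_one
  rw [edgeSet_deleteEdges, edgeSet_deleteEdges] at h₃
  simp only [Nat.card_coe_set_eq] at h₃ hcard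
  have h₄ := Set.ncard_sdiff_singleton_add_one (s := G.edgeSet \ {s(x, y)}) (a := s(a, b))
    ⟨hab, hne.1⟩ (Set.toFinite _)
  have h₅ := Set.ncard_sdiff_singleton_add_one (s := G.edgeSet) (a := s(x, y)) hxy (Set.toFinite _)
  omega

theorem card_orderedTriangles_le_six {V : Type*} [Fintype V] {G : SimpleGraph V}
    [DecidableRel G.Adj] (hG : G.Connected) (hcard : Nat.card G.edgeSet ≤ Nat.card V) :
    #(orderedTriangles G) ≤ 6 := by
  classical
  obtain h | ⟨⟨x, y, z⟩, h⟩ := (orderedTriangles G).eq_empty_or_nonempty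
  · simp [h]
  simp only [orderedTriangles, mem_filter, mem_univ, true_and] at h
  obtain ⟨hxy, hyz, hzx⟩ := h
  refine (Finset.card_le_card (t := {(x, y, z), (x, z, y), (y, x, z), (y, z, x), (z, x, y),
    (z, y, x)}) ?_).trans Finset.card_le_six
  rintro ⟨a, b, c⟩ h
  simp only [orderedTriangles, mem_filter, mem_univ, true_and] at h
  obtain ⟨hab, hbc, hca⟩ := h
  have e₁ := edge_mem_triangle hG hcard hxy hyz hzx hab hbc hca
  have e₂ := edge_mem_triangle hG hcard hyz hzx hxy hab hbc hca
  have := hxy.ne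
  have := hyz.ne
  have := hzx.ne
  simp only [Sym2.eq_iff] at e₁ e₂
  simp only [Finset.mem_insert, Finset.mem_singleton, Prod.mk.injEq]
  grind

theorem eq_zero_or_exists_of_sum_sq_le_two {ι : Type*} [Fintype ι] (z : ι → ℤ)
    (hsum : ∑ i, z i = 0) (hsq : ∑ i, z i ^ 2 ≤ 2) :
    (∀ i, z i = 0) ∨ ∃ w l, z w = 1 ∧ z l = -1 ∧ ∀ i, i ≠ w → i ≠ l → z i = 0 := by
  classical
  by_cases h0 : ∀ i, z i = 0
  · exact .inl h0
  right
  have hl : ∃ l, z l < 0 := by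
    by_contra! h
    exact h0 fun i => (Finset.sum_eq_zero_iff_of_nonneg fun i _ => h i).1 hsum i (mem_univ i)
  have hw : ∃ w, 0 < z w := by
    by_contra! h
    exact h0 fun i => (Finset.sum_eq_zero_iff_of_nonpos fun i _ => h i).1 hsum i (mem_univ i)
  obtain ⟨l, hl⟩ := hl
  obtain ⟨w, hw⟩ := hw
  have hwl : w ≠ l := by rintro rfl; omega
  have hpair : z w ^ 2 + z l ^ 2 ≤ 2 := by
    refine le_trans ?_ hsq
    rw [← Finset.sum_pair hwl (f := fun i => z i ^ 2)]
    exact Finset.sum_le_univ_sum_of_nonneg fun i => sq_nonneg _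
  refine ⟨w, l, by nlinarith, by nlinarith, fun i hiw hil => ?_⟩
  have htriple : z i ^ 2 + (z w ^ 2 + z l ^ 2) ≤ 2 := by
    refine le_trans ?_ hsq
    rw [← Finset.sum_pair hwl (f := fun i => z i ^ 2),
      ← Finset.sum_insert (f := fun i => z i ^ 2) (by simp [hiw, hil])]
    exact Finset.sum_le_univ_sum_of_nonneg fun i => sq_nonneg _
  have : z i ^ 2 ≤ 0 := by nlinarith
  exact pow_eq_zero_iff two_ne_zero |>.1 (le_antisymm this (sq_nonneg _))

/-- The vertices `f 0, …, f m` are distinct and successively adjacent. -/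
structure IsPathSeq {V : Type*} (G : SimpleGraph V) (f : ℕ → V) (m : ℕ) : Prop where
  adj : ∀ i < m, G.Adj (f i) (f (i + 1))
  inj : ∀ i ≤ m, ∀ j ≤ m, f i = f j → i = j

theorem IsPathSeq.lt_card {V : Type*} [Fintype V] {G : SimpleGraph V} {f : ℕ → V} {m : ℕ}
    (hf : IsPathSeq G f m) : m < Fintype.card V := by
  have := Fintype.card_le_of_injective (fun i : Fin (m + 1) => f i) fun i j hij =>
    Fin.ext (hf.inj _ (by omega) _ (by omega) hij)
  simpa using this

/-- Closing up a longest path: if every vertex other than `v₀` has degree at least two and `v₀` is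
not isolated, some path from `v₀` ends in a vertex adjacent to an earlier non-predecessor. -/
theorem exists_isPathSeq_adj_last {V : Type*} [Fintype V] (G : SimpleGraph V)
    [DecidableRel G.Adj] (v₀ : V) (h₀ : 1 ≤ G.degree v₀) (h : ∀ v ≠ v₀, 2 ≤ G.degree v) :
    ∃ f m j, IsPathSeq G f m ∧ f 0 = v₀ ∧ j + 1 < m ∧ G.Adj (f m) (f j) := by
  classical
  let P : ℕ → Prop := fun m => ∃ f, IsPathSeq G f m ∧ f 0 = v₀
  have hP0 : P 0 := ⟨fun _ => v₀, ⟨by simp, by omega⟩, rfl⟩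
  have hb : ∀ m, P m → m ≤ Fintype.card V := fun m ⟨f, hf, _⟩ => hf.lt_card.le
  obtain ⟨f, hf, hf0⟩ : P (Nat.findGreatest P (Fintype.card V)) :=
    Nat.findGreatest_spec (Nat.zero_le _) hP0
  have hnot : ¬ P (Nat.findGreatest P (Fintype.card V) + 1) := fun hP =>
    absurd (Nat.le_findGreatest (hb _ hP) hP) (by omega)
  generalize Nat.findGreatest P (Fintype.card V) = m at hf hnot
  have hmem : ∀ u, G.Adj (f m) u → ∃ i ≤ m, u = f i := by
    intro u hu
    by_contra! hne
    refine hnot ⟨Function.update f (m + 1) u, ⟨fun i hi => ?_, fun i hi j hj hij => ?_⟩, ?_⟩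
    · rcases Nat.lt_succ_iff_lt_or_eq.1 hi with hi | rfl
      · rw [Function.update_of_ne (by omega), Function.update_of_ne (by omega)]
        exact hf.adj i hi
      · rw [Function.update_of_ne (by omega), Function.update_self]
        exact hu
    · have := hf.inj i
      grind [Function.update_apply]
    · rw [Function.update_of_ne (by omega), hf0]
  have hm : m ≠ 0 := by
    rintro rfl
    rw [← hf0, ← G.card_neighborFinset_eq_degree] at h₀
    obtain ⟨u, hu⟩ := Finset.card_pos.1 h₀
    rw [mem_neighborFinset] at hu
    obtain ⟨i, hi, rfl⟩ := hmem u hu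
    obtain rfl : i = 0 := by omega
    exact hu.ne rfl
  have hdeg : 2 ≤ G.degree (f m) := h _ fun he =>
    hm (hf.inj m le_rfl 0 (by omega) (he.trans hf0.symm))
  rw [← G.card_neighborFinset_eq_degree] at hdeg
  obtain ⟨u, hu, hne⟩ := Finset.exists_mem_ne hdeg (f (m - 1))
  rw [mem_neighborFinset] at hu
  obtain ⟨i, hi, rfl⟩ := hmem u hu
  refine ⟨f, m, i, hf, hf0, ?_, hu⟩
  have : i ≠ m := fun he => hu.ne (by rw [he])
  have : i ≠ m - 1 := fun he => hne (by rw [he])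
  omega

theorem eq_of_adj_of_degree_one {V : Type*} [Fintype V] {G : SimpleGraph V} [DecidableRel G.Adj]
    {v x u : V} (hd : G.degree v = 1) (hx : G.Adj v x) (hu : G.Adj v u) : u = x := by
  rw [← G.card_neighborFinset_eq_degree] at hd
  exact Finset.card_le_one.1 hd.le u (by simpa) x (by simpa)

theorem eq_or_eq_of_adj_of_degree_two {V : Type*} [Fintype V] {G : SimpleGraph V}
    [DecidableRel G.Adj] {v x y u : V} (hd : G.degree v = 2) (hxy : x ≠ y)
    (hx : G.Adj v x) (hy : G.Adj v y) (hu : G.Adj v u) : u = x ∨ u = y := by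
  classical
  have hsub : {x, y} ⊆ G.neighborFinset v := by
    simp [Finset.insert_subset_iff, hx, hy]
  have := Finset.eq_of_subset_of_card_le hsub
    (by rw [G.card_neighborFinset_eq_degree, hd, Finset.card_pair hxy])
  have hmem : u ∈ G.neighborFinset v := by simpa
  simpa [← this] using hmem

theorem eq_or_eq_or_eq_of_adj_of_degree_le_three {V : Type*} [Fintype V] {G : SimpleGraph V}
    [DecidableRel G.Adj] {v x y z u : V} (hd : G.degree v ≤ 3) (hxy : x ≠ y) (hxz : x ≠ z)
    (hyz : y ≠ z) (hx : G.Adj v x) (hy : G.Adj v y) (hz : G.Adj v z) (hu : G.Adj v u) :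
    u = x ∨ u = y ∨ u = z := by
  classical
  have hsub : {x, y, z} ⊆ G.neighborFinset v := by
    simp [Finset.insert_subset_iff, hx, hy, hz]
  have := Finset.eq_of_subset_of_card_le hsub (by
    rw [G.card_neighborFinset_eq_degree, Finset.card_eq_three.2 ⟨x, y, z, hxy, hxz, hyz, rfl⟩]
    exact hd)
  have hmem : u ∈ G.neighborFinset v := by simpa
  simpa [← this] using hmem

theorem three_le_degree {V : Type*} [Fintype V] {G : SimpleGraph V}
    [DecidableRel G.Adj] {v x y z : V} (hxy : x ≠ y) (hxz : x ≠ z)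
    (hyz : y ≠ z) (hx : G.Adj v x) (hy : G.Adj v y) (hz : G.Adj v z) : 3 ≤ G.degree v := by
  classical
  have hsub : {x, y, z} ⊆ G.neighborFinset v := by
    simp [Finset.insert_subset_iff, hx, hy, hz]
  rw [← G.card_neighborFinset_eq_degree, ← Finset.card_eq_three.2 ⟨x, y, z, hxy, hxz, hyz, rfl⟩]
  exact Finset.card_le_card hsub

/-- A nonempty set of vertices of a connected graph, listed by `f`, that contains all neighbours of
its members is the whole vertex set. -/
theorem exists_eq_of_connected {V : Type*} {G : SimpleGraph V} (hG : G.Connected)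
    {f : ℕ → V} {m : ℕ} (hclosed : ∀ a ≤ m, ∀ u, G.Adj (f a) u → ∃ b ≤ m, u = f b) (v : V) :
    ∃ b ≤ m, v = f b := by
  have key : ∀ {x y : V}, G.Walk x y → (∃ b ≤ m, x = f b) → ∃ b ≤ m, y = f b := by
    intro x y p
    induction p with
    | nil => exact id
    | cons hadj _ ih =>
      rintro ⟨b, hb, rfl⟩
      exact ih (hclosed b hb _ hadj)
  obtain ⟨p⟩ := hG.preconnected (f 0) v
  exact key p ⟨0, Nat.zero_le _, rfl⟩

/-- The path sequence `f 0, …, f m` exhausts the connected graph `G`, whose only further edge joins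
`f j` and `f m`. -/
structure IsChordedPath {V : Type*} (G : SimpleGraph V) (f : ℕ → V) (m j : ℕ) : Prop where
  isPathSeq : IsPathSeq G f m
  surj : ∀ v, ∃ b ≤ m, v = f b
  adj_iff : ∀ a ≤ m, ∀ b ≤ m, G.Adj (f a) (f b) ↔
    b = a + 1 ∨ a = b + 1 ∨ (a = j ∧ b = m) ∨ (a = m ∧ b = j)

theorem IsPathSeq.isChordedPath {V : Type*} {G : SimpleGraph V} (hG : G.Connected)
    {f : ℕ → V} {m j : ℕ} (hf : IsPathSeq G f m) (hadj : G.Adj (f m) (f j))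
    (h : ∀ a ≤ m, ∀ u, G.Adj (f a) u → ∃ b ≤ m, u = f b ∧
      (b = a + 1 ∨ a = b + 1 ∨ (a = j ∧ b = m) ∨ (a = m ∧ b = j))) :
    IsChordedPath G f m j where
  isPathSeq := hf
  surj := exists_eq_of_connected hG fun a ha u hu =>
    let ⟨b, hb, hub, _⟩ := h a ha u hu
    ⟨b, hb, hub⟩
  adj_iff a ha b hb := by
    constructor
    · intro hab
      obtain ⟨c, hc, hbc, hac⟩ := h a ha _ hab
      rwa [hf.inj b hb c hc hbc]
    · rintro (rfl | rfl | ⟨rfl, rfl⟩ | ⟨rfl, rfl⟩)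
      · exact hf.adj a (by omega)
      · exact (hf.adj b (by omega)).symm
      · exact hadj.symm
      · exact hadj

theorem IsChordedPath.card_eq {V : Type*} [Fintype V] {G : SimpleGraph V} {f : ℕ → V} {m j : ℕ}
    (hf : IsChordedPath G f m j) : Fintype.card V = m + 1 := by
  have := Fintype.card_le_of_surjective (fun i : Fin (m + 1) => f i) fun v =>
    let ⟨b, hb, hv⟩ := hf.surj v
    ⟨⟨b, by omega⟩, hv.symm⟩
  rw [Fintype.card_fin] at this
  have := hf.isPathSeq.lt_card
  omega

theorem IsChordedPath.nonempty_iso_cycleGraph {V : Type*} {G : SimpleGraph V} {f : ℕ → V} {m : ℕ}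
    (hf : IsChordedPath G f m 0) (hm : 2 ≤ m) : Nonempty (G ≃g cycleGraph (m + 1)) := by
  let e : Fin (m + 1) ≃ V := Equiv.ofBijective (fun i => f i)
    ⟨fun i j hij => Fin.ext (hf.isPathSeq.inj _ (by omega) _ (by omega) hij), fun v =>
      let ⟨b, hb, hv⟩ := hf.surj v
      ⟨⟨b, by omega⟩, hv.symm⟩⟩
  refine ⟨RelIso.symm ⟨e, fun {a b} => ?_⟩⟩
  change G.Adj (f a) (f b) ↔ _
  rw [hf.adj_iff _ (by omega) _ (by omega), cycleGraph_adj', Fin.val_sub, Fin.val_sub]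
  have ha := a.isLt
  have hb := b.isLt
  have hmod : ∀ x y : ℕ, x < m + 1 → y < m + 1 →
      (m + 1 - y + x) % (m + 1) = if y ≤ x then x - y else m + 1 - y + x := by
    intro x y hx hy
    split_ifs with hle
    · rw [show m + 1 - y + x = x - y + (m + 1) by omega, Nat.add_mod_right,
        Nat.mod_eq_of_lt (by omega)]
    · exact Nat.mod_eq_of_lt (by omega)
  rw [hmod _ _ ha hb, hmod _ _ hb ha]
  split_ifs <;> omega

theorem IsChordedPath.nonempty_iso_dGraph {V : Type*} {G : SimpleGraph V} {f : ℕ → V} {j : ℕ}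
    (hf : IsChordedPath G f (j + 2) j) : Nonempty (G ≃g dGraph (j + 2 + 1)) := by
  let e : Fin (j + 2 + 1) ≃ V := Equiv.ofBijective (fun i => f (j + 2 - i))
    ⟨fun a b hab => by
      have := hf.isPathSeq.inj _ (by omega) _ (by omega) hab
      omega, fun v =>
      let ⟨b, hb, hv⟩ := hf.surj v
      ⟨⟨j + 2 - b, by omega⟩, by simp only [hv]; congr 1; omega⟩⟩
  refine ⟨RelIso.symm ⟨e, fun {a b} => ?_⟩⟩
  change G.Adj (f (j + 2 - a)) (f (j + 2 - b)) ↔ _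
  rw [hf.adj_iff _ (by omega) _ (by omega), dGraph, fromRel_adj, Ne, Fin.ext_iff]
  omega

theorem nonempty_iso_cycleGraph_of_degree_eq_two {V : Type*} [Fintype V] {G : SimpleGraph V}
    [DecidableRel G.Adj] (hG : G.Connected) (hdeg : ∀ v, G.degree v = 2) :
    Nonempty (G ≃g cycleGraph (Fintype.card V)) := by
  obtain ⟨v₀⟩ := hG.nonempty
  obtain ⟨f, m, j, hf, -, hjm, hadj⟩ :=
    exists_isPathSeq_adj_last G v₀ (by simp [hdeg]) fun v _ => (hdeg v).ge
  have hne : ∀ {a b}, a ≤ m → b ≤ m → a ≠ b → f a ≠ f b :=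
    fun ha hb hab h => hab (hf.inj _ ha _ hb h)
  have hprev : ∀ {a}, a < m → G.Adj (f (a + 1)) (f a) := fun ha => (hf.adj _ ha).symm
  obtain rfl : j = 0 := by
    rcases j with _ | j
    · rfl
    have := three_le_degree (hne (by omega) (by omega) (by omega))
      (hne (by omega) (by omega) (by omega)) (hne (by omega) (by omega) (by omega))
      (hprev (a := j) (by omega)) (hf.adj (j + 1) (by omega)) hadj.symm
    rw [hdeg] at this
    omega
  have hchord : IsChordedPath G f m 0 := by
    refine hf.isChordedPath hG hadj fun a ha u hu => ?_
    rcases a with _ | a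
    · obtain rfl | rfl := eq_or_eq_of_adj_of_degree_two (hdeg _)
        (hne (by omega) (by omega) (by omega)) (hf.adj 0 (by omega)) hadj.symm hu
      · exact ⟨0 + 1, by omega, rfl, by omega⟩
      · exact ⟨m, le_rfl, rfl, by omega⟩
    · rcases ha.lt_or_eq with ha | rfl
      · obtain rfl | rfl := eq_or_eq_of_adj_of_degree_two (hdeg _)
          (hne (by omega) (by omega) (by omega)) (hprev (a := a) (by omega)) (hf.adj (a + 1) ha) hu
        · exact ⟨a, by omega, rfl, by omega⟩
        · exact ⟨a + 1 + 1, by omega, rfl, by omega⟩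
      · obtain rfl | rfl := eq_or_eq_of_adj_of_degree_two (hdeg _)
          (hne (by omega) (by omega) (by omega)) (hprev (a := a) (by omega)) hadj hu
        · exact ⟨a, by omega, rfl, by omega⟩
        · exact ⟨0, by omega, rfl, by omega⟩
  rw [hchord.card_eq]
  exact hchord.nonempty_iso_cycleGraph (by omega)

theorem nonempty_iso_dGraph_of_degrees {V : Type*} [Fintype V] {G : SimpleGraph V}
    [DecidableRel G.Adj] (hG : G.Connected) {w l : V} (hw : G.degree w = 3) (hl : G.degree l = 1)
    (hdeg : ∀ v, v ≠ w → v ≠ l → G.degree v = 2)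
    {x y z : V} (hxy : G.Adj x y) (hyz : G.Adj y z) (hzx : G.Adj z x) :
    Nonempty (G ≃g dGraph (Fintype.card V)) := by
  obtain ⟨f, m, j, hf, hf0, hjm, hadj⟩ := exists_isPathSeq_adj_last G l hl.ge fun v hv => by
    by_cases hvw : v = w
    · rw [hvw, hw]; omega
    · exact (hdeg v hvw hv).ge
  have hne : ∀ {a b}, a ≤ m → b ≤ m → a ≠ b → f a ≠ f b :=
    fun ha hb hab h => hab (hf.inj _ ha _ hb h)
  have hprev : ∀ {a}, a < m → G.Adj (f (a + 1)) (f a) := fun ha => (hf.adj _ ha).symm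
  have hfirst : ∀ u, G.Adj (f 0) u → u = f 1 := fun u =>
    eq_of_adj_of_degree_one (hf0 ▸ hl) (hf.adj 0 (by omega))
  obtain ⟨i, rfl⟩ : ∃ i, j = i + 1 := by
    rcases j with _ | j
    · exact absurd (hfirst _ hadj.symm) (hne (by omega) (by omega) (by omega))
    · exact ⟨j, rfl⟩
  have hthree := three_le_degree (hne (by omega) (by omega) (by omega))
    (hne (by omega) (by omega) (by omega)) (hne (by omega) (by omega) (by omega))
    (hprev (a := i) (by omega)) (hf.adj (i + 1) (by omega)) hadj.symm
  have hwi : f (i + 1) = w := by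
    by_contra hiw
    rw [hdeg _ hiw (hf0 ▸ hne (by omega) (by omega) (by omega))] at hthree
    omega
  have htwo : ∀ {a}, a ≤ m → a ≠ 0 → a ≠ i + 1 → G.degree (f a) = 2 := fun ha h0 hi =>
    hdeg _ (hwi ▸ hne ha (by omega) hi) (hf0 ▸ hne ha (by omega) h0)
  have hchord : IsChordedPath G f m (i + 1) := by
    refine hf.isChordedPath hG hadj fun a ha u hu => ?_
    rcases a with _ | a
    · exact ⟨1, by omega, hfirst u hu, by omega⟩
    · rcases ha.lt_or_eq with ha | rfl
      · by_cases hai : a = i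
        · subst hai
          obtain rfl | rfl | rfl := eq_or_eq_or_eq_of_adj_of_degree_le_three (hwi ▸ hw.le)
            (hne (by omega) (by omega) (by omega)) (hne (by omega) (by omega) (by omega))
            (hne (by omega) (by omega) (by omega))
            (hprev (a := a) (by omega)) (hf.adj (a + 1) ha) hadj.symm hu
          · exact ⟨a, by omega, rfl, by omega⟩
          · exact ⟨a + 1 + 1, by omega, rfl, by omega⟩
          · exact ⟨m, by omega, rfl, by omega⟩
        · obtain rfl | rfl := eq_or_eq_of_adj_of_degree_two
            (htwo (by omega) (by omega) (by omega)) (hne (by omega) (by omega) (by omega))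
            (hprev (a := a) (by omega)) (hf.adj (a + 1) ha) hu
          · exact ⟨a, by omega, rfl, by omega⟩
          · exact ⟨a + 1 + 1, by omega, rfl, by omega⟩
      · obtain rfl | rfl := eq_or_eq_of_adj_of_degree_two
          (htwo (by omega) (by omega) (by omega)) (hne (by omega) (by omega) (by omega))
          (hprev (a := a) (by omega)) hadj hu
        · exact ⟨a, by omega, rfl, by omega⟩
        · exact ⟨i + 1, by omega, rfl, by omega⟩
  obtain rfl : m = i + 1 + 2 := by
    obtain ⟨a, ha, rfl⟩ := hchord.surj x
    obtain ⟨b, hb, rfl⟩ := hchord.surj y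
    obtain ⟨c, hc, rfl⟩ := hchord.surj z
    rw [hchord.adj_iff _ (by omega) _ (by omega)] at hxy hyz hzx
    omega
  rw [hchord.card_eq]
  exact hchord.nonempty_iso_dGraph

theorem connected_indepEquiv_cycle {V : Type*} [Fintype V] (G : SimpleGraph V) (n : ℕ)
    (hn : 3 ≤ n) (hconn : G.Connected)
    (h : ∀ k, indepCount G k = indepCount (SimpleGraph.cycleGraph n) k) :
    Nonempty (G ≃g SimpleGraph.cycleGraph n) ∨ Nonempty (G ≃g dGraph n) := by
  classical
  obtain ⟨n, rfl⟩ := Nat.exists_eq_add_of_le' hn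
  have hV : Fintype.card V = n + 3 := by
    rw [← indepCount_one G, h, indepCount_one, Fintype.card_fin]
  have hsum : ∑ v, (G.degree v : ℤ) = 2 * (n + 3) := by
    have h₁ := two_mul_indepCount_two_eq_sub G
    have h₂ := two_mul_indepCount_two_eq_sub (cycleGraph (n + 3))
    rw [h, h₂, hV, Fintype.card_fin] at h₁
    simp only [cycleGraph_degree_three_le, Finset.sum_const, Finset.card_univ, Fintype.card_fin,
      nsmul_eq_mul] at h₁
    push_cast at h₁
    linarith
  have hcard : Nat.card G.edgeSet ≤ Nat.card V := by
    have := G.sum_degrees_eq_twice_card_edges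
    zify at this
    rw [hsum] at this
    rw [Nat.card_eq_fintype_card, ← edgeFinset_card, Nat.card_eq_fintype_card, hV]
    omega
  have hsum₀ : ∑ v, ((G.degree v : ℤ) - 2) = 0 := by
    rw [Finset.sum_sub_distrib, hsum]
    simp only [Finset.sum_const, Finset.card_univ, hV, nsmul_eq_mul]
    push_cast
    ring
  have hsq : 3 * ∑ v, ((G.degree v : ℤ) - 2) ^ 2 ≤ (#(orderedTriangles G) : ℤ) := by
    have h₁ := six_mul_indepCount_three_add_card_orderedTriangles G
    have h₂ := six_mul_indepCount_three_add_card_orderedTriangles (cycleGraph (n + 3))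
    have hexp : ∑ v, ((G.degree v : ℤ) - 2) ^ 2 =
        ∑ v, ((G.degree v : ℤ) + 1) ^ 2 - 6 * ∑ v, (G.degree v : ℤ) + 3 * (n + 3) := by
      have : ∀ v, ((G.degree v : ℤ) - 2) ^ 2 =
          ((G.degree v : ℤ) + 1) ^ 2 - 6 * (G.degree v : ℤ) + 3 := fun v => by ring
      simp only [this, Finset.sum_add_distrib, Finset.sum_sub_distrib, ← Finset.mul_sum]
      simp only [Finset.sum_const, Finset.card_univ, hV, nsmul_eq_mul]
      push_cast
      ring
    have hsum₁ : ∑ v, ((G.degree v : ℤ) + 1) = 3 * (n + 3) := by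
      rw [Finset.sum_add_distrib, hsum]
      simp only [Finset.sum_const, Finset.card_univ, hV, nsmul_eq_mul]
      push_cast
      ring
    rw [h, hsum₁, hsum, hV] at h₁
    simp only [cycleGraph_degree_three_le, Finset.sum_const, Finset.card_univ, Fintype.card_fin,
      nsmul_eq_mul] at h₂
    rw [hsum] at hexp
    push_cast at h₁ h₂
    have : (0 : ℤ) ≤ #(orderedTriangles (cycleGraph (n + 3))) := Nat.cast_nonneg _
    linarith
  have hsix : (#(orderedTriangles G) : ℤ) ≤ 6 := mod_cast card_orderedTriangles_le_six hconn hcard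
  rw [← hV]
  obtain h2 | ⟨w, l, hw, hl, h2⟩ := eq_zero_or_exists_of_sum_sq_le_two _ hsum₀ (by linarith)
  · exact .inl (nonempty_iso_cycleGraph_of_degree_eq_two hconn fun v => by have := h2 v; omega)
  · have hpos : 0 < ∑ v, ((G.degree v : ℤ) - 2) ^ 2 :=
      Finset.sum_pos' (fun v _ => sq_nonneg _) ⟨w, mem_univ w, by rw [hw]; norm_num⟩
    have hcard_pos : 0 < #(orderedTriangles G) := by zify; linarith
    obtain ⟨⟨x, y, z⟩, ht⟩ := Finset.card_pos.1 hcard_pos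
    simp only [orderedTriangles, mem_filter, mem_univ, true_and] at ht
    exact .inr (nonempty_iso_dGraph_of_degrees hconn (w := w) (l := l) (by omega) (by omega)
      (fun v hvw hvl => by have := h2 v hvw hvl; omega) ht.1 ht.2.1 ht.2.2)
end

section
/- For every n ≥ 3, the real numbers r_i = −1/(2(1 + cos((2i−1)π/n))) for i = 1, 2, …, ⌊n/2⌋ are pairwise distinct, and each r_i is a root of the independence polynomial of the cycle C_n; since this polynomial has degree ⌊n/2⌋, these are exactly its roots. -/
open SimpleGraph Polynomial Finset

/-- The independence polynomial of `G`, as a polynomial over `ℝ`. -/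
noncomputable def indepPolyR {V : Type*} [Fintype V] (G : SimpleGraph V) : Polynomial ℝ :=
  ∑ k ∈ Finset.range (Fintype.card V + 1), Polynomial.C ((indepCount G k : ℝ)) * Polynomial.X ^ k

/-- The claimed roots of the independence polynomial of the cycle `C_n`. -/
noncomputable def cycleRoot (n i : ℕ) : ℝ :=
  -(1 / (2 * (1 + Real.cos ((2 * (i : ℝ) - 1) * Real.pi / (n : ℝ)))))

/-- The weighted count `∑ x ^ #s` over the subsets `s` of `Ico a (a + n)` without two consecutive
elements: the independence polynomial of a path on `n` vertices, evaluated at `x`. -/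
noncomputable def pathIndepSum (x : ℝ) (a n : ℕ) : ℝ :=
  ∑ s ∈ (Finset.Ico a (a + n)).powerset, if ∀ i ∈ s, i + 1 ∉ s then x ^ #s else 0

lemma pathIndepSum_zero (x : ℝ) (a : ℕ) : pathIndepSum x a 0 = 1 := by
  simp [pathIndepSum]

lemma pathIndepSum_one (x : ℝ) (a : ℕ) : pathIndepSum x a 1 = 1 + x := by
  have h : Finset.Ico a (a + 1) = insert a ∅ := by ext; simp
  rw [pathIndepSum, h, Finset.sum_powerset_insert (Finset.notMem_empty a)]
  simp

lemma pathIndepSum_add_two (x : ℝ) (a n : ℕ) :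
    pathIndepSum x a (n + 2) = pathIndepSum x a (n + 1) + x * pathIndepSum x a n := by
  have h₂ : Finset.Ico a (a + (n + 2)) = insert (a + n + 1) (Finset.Ico a (a + (n + 1))) := by
    ext; simp; omega
  have h₁ : Finset.Ico a (a + (n + 1)) = insert (a + n) (Finset.Ico a (a + n)) := by
    ext; simp; omega
  rw [pathIndepSum, h₂, Finset.sum_powerset_insert (by simp; omega)]
  refine congrArg₂ (· + ·) rfl ?_
  rw [h₁, Finset.sum_powerset_insert (by simp), pathIndepSum, Finset.mul_sum]
  conv_rhs => rw [← add_zero (∑ _ ∈ _, _)]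
  refine congrArg₂ (· + ·) (Finset.sum_congr rfl fun s hs => ?_)
    (Finset.sum_eq_zero fun s _ => if_neg ?_)
  · have hlt : ∀ i ∈ s, i < a + n := fun i hi => (Finset.mem_Ico.1 (Finset.mem_powerset.1 hs hi)).2
    have hn : a + n + 1 ∉ s := fun h => by have := hlt _ h; omega
    have hiff : (∀ i ∈ insert (a + n + 1) s, i + 1 ∉ insert (a + n + 1) s) ↔
        ∀ i ∈ s, i + 1 ∉ s := by
      simp only [Finset.mem_insert]
      refine ⟨fun h i hi hi' => h i (.inr hi) (.inr hi'), ?_⟩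
      rintro h i (rfl | hi) (hi' | hi')
      · omega
      · have := hlt _ hi'; omega
      · have := hlt _ hi; omega
      · exact h i hi hi'
    simp only [hiff, Finset.card_insert_of_notMem hn, pow_succ']
    split_ifs <;> simp
  · intro h
    exact h (a + n) (by simp) (by simp)

/-- The weighted count `∑ x ^ #s` over the independent sets `s` of a cycle, expressed through
paths by deciding whether the last vertex lies in `s`. -/
lemma sum_cyclic_indep (x : ℝ) (m : ℕ) :
    (∑ s ∈ (Finset.range (m + 3)).powerset,
      if (∀ i ∈ s, i + 1 ∉ s) ∧ ¬(0 ∈ s ∧ m + 2 ∈ s) then x ^ #s else 0) =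
    pathIndepSum x 0 (m + 2) + x * pathIndepSum x 1 m := by
  have h₂ : Finset.range (m + 3) = insert (m + 2) (Finset.Ico 0 (0 + (m + 2))) := by
    ext; simp; omega
  have h₁ : Finset.Ico 0 (0 + (m + 2)) = insert 0 (insert (m + 1) (Finset.Ico 1 (1 + m))) := by
    ext; simp; omega
  rw [h₂, Finset.sum_powerset_insert (by simp)]
  refine congrArg₂ (· + ·) (Finset.sum_congr rfl fun s hs => ?_) ?_
  · have hn : m + 2 ∉ s := fun h => by have := Finset.mem_powerset.1 hs h; simp at this
    simp [hn]
  rw [h₁, Finset.sum_powerset_insert (by simp), Finset.sum_powerset_insert (by simp; omega),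
    pathIndepSum, Finset.mul_sum, add_assoc]
  conv_rhs => rw [← add_zero (∑ _ ∈ _, _)]
  refine congrArg₂ (· + ·) (Finset.sum_congr rfl fun s hs => ?_) ?_
  · have hlt : ∀ i ∈ s, 1 ≤ i ∧ i < 1 + m := fun i hi =>
      Finset.mem_Ico.1 (Finset.mem_powerset.1 hs hi)
    have hn : m + 2 ∉ s := fun h => by have := hlt _ h; omega
    have hiff : ((∀ i ∈ insert (m + 2) s, i + 1 ∉ insert (m + 2) s) ∧
        ¬(0 ∈ insert (m + 2) s ∧ m + 2 ∈ insert (m + 2) s)) ↔ ∀ i ∈ s, i + 1 ∉ s := by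
      simp only [Finset.mem_insert]
      refine ⟨fun h i hi hi' => h.1 i (.inr hi) (.inr hi'), fun h => ⟨?_, ?_⟩⟩
      · rintro i (rfl | hi) (hi' | hi')
        · omega
        · have := hlt _ hi'; omega
        · have := hlt _ hi; omega
        · exact h i hi hi'
      · rintro ⟨h0 | h0, -⟩
        · omega
        · have := hlt _ h0; omega
    simp only [hiff, Finset.card_insert_of_notMem hn, pow_succ']
    split_ifs <;> simp
  · rw [Finset.sum_eq_zero fun s _ => if_neg ?_, Finset.sum_eq_zero fun s _ => if_neg ?_, add_zero]
    · exact fun h => h.2 (by simp)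
    · exact fun h => h.1 (m + 1) (by simp) (by simp)

lemma pathIndepSum_trig {φ x : ℝ} (hx : x * (2 * Real.cos φ) ^ 2 = -1) (a n : ℕ) :
    pathIndepSum x a n * Real.sin φ * (2 * Real.cos φ) ^ (n + 1) = Real.sin ((n + 2) * φ) := by
  induction n using Nat.twoStepInduction with
  | zero => simp [pathIndepSum_zero, Real.sin_two_mul]; ring
  | one =>
    rw [pathIndepSum_one]
    have h3 : ((1 : ℕ) + 2 : ℝ) * φ = 3 * φ := by push_cast; ring
    rw [h3, Real.sin_three_mul]
    linear_combination Real.sin φ * hx + 4 * Real.sin φ * Real.sin_sq_add_cos_sq φ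
  | more n h₀ h₁ =>
    have e₁ : ((n + 1 : ℕ) + 2 : ℝ) * φ = (n + 2) * φ + φ := by push_cast; ring
    have e₂ : ((n + 2 : ℕ) + 2 : ℝ) * φ = (n + 2) * φ + φ + φ := by push_cast; ring
    rw [e₁] at h₁
    rw [e₂, pathIndepSum_add_two]
    have key : Real.sin ((n + 2) * φ + φ + φ) =
        2 * Real.cos φ * Real.sin ((n + 2) * φ + φ) - Real.sin ((n + 2) * φ) := by
      simp only [Real.sin_add, Real.cos_add]
      linear_combination -Real.sin ((n + 2) * φ) * Real.sin_sq_add_cos_sq φ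
    rw [key, ← h₁, ← h₀]
    linear_combination pathIndepSum x a n * Real.sin φ * (2 * Real.cos φ) ^ (n + 1) * hx

lemma cycleGraph_adj_iff_val {n : ℕ} (hn : 3 ≤ n) (u v : Fin n) :
    (cycleGraph n).Adj u v ↔ u.val + 1 = v.val ∨ v.val + 1 = u.val ∨
      (u.val = 0 ∧ v.val + 1 = n) ∨ (v.val = 0 ∧ u.val + 1 = n) := by
  rw [cycleGraph_adj']
  have := u.isLt
  have := v.isLt
  rcases le_or_gt u v with h | h
  · rcases h.eq_or_lt with rfl | h'
    · simp [Fin.coe_sub_iff_le.2 le_rfl]; omega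
    · rw [Fin.coe_sub_iff_lt.2 h', Fin.coe_sub_iff_le.2 h]
      rw [Fin.lt_def] at h'
      omega
  · rw [Fin.coe_sub_iff_lt.2 h, Fin.coe_sub_iff_le.2 h.le]
    rw [Fin.lt_def] at h
    omega

open Classical in
lemma indepCount_eq_card {V : Type*} [Fintype V] (G : SimpleGraph V) (k : ℕ) :
    indepCount G k =
      #{s : Finset V | s.card = k ∧ ∀ u ∈ s, ∀ v ∈ s, ¬ G.Adj u v} := by
  rw [indepCount, Nat.card_eq_fintype_card, Fintype.card_subtype]

open Classical in
lemma eval_indepPolyR {V : Type*} [Fintype V] (G : SimpleGraph V) (x : ℝ) :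
    (indepPolyR G).eval x =
      ∑ s : Finset V, if ∀ u ∈ s, ∀ v ∈ s, ¬ G.Adj u v then x ^ #s else 0 := by
  have hmap : ∀ s ∈ ({s : Finset V | ∀ u ∈ s, ∀ v ∈ s, ¬ G.Adj u v} : Finset (Finset V)),
      #s ∈ Finset.range (Fintype.card V + 1) := fun s _ =>
    Finset.mem_range.2 (Nat.lt_succ_of_le (Finset.card_le_univ s))
  rw [← Finset.sum_filter, ← Finset.sum_fiberwise_of_maps_to hmap, indepPolyR, eval_finsetSum]
  refine Finset.sum_congr rfl fun k _ => ?_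
  rw [Finset.sum_congr rfl fun s hs => by rw [(Finset.mem_filter.1 hs).2], Finset.sum_const,
    Finset.filter_filter, indepCount_eq_card]
  simp [and_comm]

lemma coeff_indepPolyR {V : Type*} [Fintype V] (G : SimpleGraph V) (k : ℕ) :
    (indepPolyR G).coeff k = indepCount G k := by
  simp only [indepPolyR, finsetSum_coeff, coeff_C_mul_X_pow, Finset.sum_ite_eq,
    Finset.mem_range, ite_eq_left_iff, not_lt]
  intro hk
  have : IsEmpty {s : Finset V // s.card = k ∧ ∀ u ∈ s, ∀ v ∈ s, ¬ G.Adj u v} :=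
    ⟨fun s => by have := Finset.card_le_univ s.1; have := s.2.1; omega⟩
  simp [indepCount]

lemma eval_indepPolyR_cycleGraph (m : ℕ) (x : ℝ) :
    (indepPolyR (cycleGraph (m + 3))).eval x =
      pathIndepSum x 0 (m + 2) + x * pathIndepSum x 1 m := by
  classical
  rw [eval_indepPolyR, ← sum_cyclic_indep]
  refine Finset.sum_bij (fun s _ => s.map Fin.valEmbedding) (fun s _ => ?_)
    (fun s _ t _ h => Finset.map_injective _ h) (fun t ht => ?_) (fun s _ => ?_)
  · rw [Finset.mem_powerset]
    intro i hi
    obtain ⟨u, -, rfl⟩ := Finset.mem_map.1 hi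
    exact Finset.mem_range.2 u.isLt
  · have hlt : ∀ i ∈ t, i < m + 3 := fun i hi =>
      Finset.mem_range.1 (Finset.mem_powerset.1 ht hi)
    refine ⟨t.attachFin hlt, Finset.mem_univ _, Finset.map_valEmbedding_attachFin hlt⟩
  · have hiff : (∀ u ∈ s, ∀ v ∈ s, ¬ (cycleGraph (m + 3)).Adj u v) ↔
        (∀ i ∈ s.map Fin.valEmbedding, i + 1 ∉ s.map Fin.valEmbedding) ∧
          ¬(0 ∈ s.map Fin.valEmbedding ∧ m + 2 ∈ s.map Fin.valEmbedding) := by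
      simp only [cycleGraph_adj_iff_val (show 3 ≤ m + 3 by omega), Finset.mem_map,
        Fin.valEmbedding_apply]
      constructor
      · refine fun h => ⟨?_, ?_⟩
        · rintro _ ⟨u, hu, rfl⟩ ⟨v, hv, huv⟩
          exact h u hu v hv (by omega)
        · rintro ⟨⟨u, hu, hu'⟩, v, hv, hv'⟩
          exact h u hu v hv (by omega)
      · rintro ⟨h, h'⟩ u hu v hv (huv | huv | huv | huv)
        · exact h u ⟨u, hu, rfl⟩ ⟨v, hv, huv.symm⟩
        · exact h v ⟨v, hv, rfl⟩ ⟨u, hu, huv.symm⟩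
        · exact h' ⟨⟨u, hu, huv.1⟩, v, hv, by omega⟩
        · exact h' ⟨⟨v, hv, huv.1⟩, u, hu, by omega⟩
    simp only [hiff, Finset.card_map]

lemma two_mul_card_le_of_cycleGraph_indep {n : ℕ} (hn : 3 ≤ n) {s : Finset (Fin n)}
    (hs : ∀ u ∈ s, ∀ v ∈ s, ¬ (cycleGraph n).Adj u v) : 2 * #s ≤ n := by
  obtain ⟨m, rfl⟩ := Nat.exists_eq_add_of_le' (show 2 ≤ n by omega)
  have hdisj : Disjoint s (s.map (addRightEmbedding 1)) := by
    rw [Finset.disjoint_left]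
    intro u hu hu'
    obtain ⟨v, hv, rfl⟩ := Finset.mem_map.1 hu'
    exact hs _ hu v hv (by simp [cycleGraph_adj])
  have := Finset.card_le_univ (s.disjUnion _ hdisj)
  rw [Finset.card_disjUnion, Finset.card_map, Fintype.card_fin] at this
  omega

lemma indepCount_cycleGraph_half_ne_zero {n : ℕ} (hn : 3 ≤ n) :
    indepCount (cycleGraph n) (n / 2) ≠ 0 := by
  let f : Fin (n / 2) ↪ Fin n :=
    ⟨fun i => ⟨2 * i.val, by omega⟩, fun i j h => by simp at h; omega⟩
  have : Nonempty {s : Finset (Fin n) //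
      s.card = n / 2 ∧ ∀ u ∈ s, ∀ v ∈ s, ¬ (cycleGraph n).Adj u v} := by
    refine ⟨Finset.univ.map f, by simp, ?_⟩
    simp only [Finset.mem_map, Finset.mem_univ, true_and, forall_exists_index,
      forall_apply_eq_imp_iff, cycleGraph_adj_iff_val hn]
    intro i j
    change ¬(2 * i.val + 1 = 2 * j.val ∨ 2 * j.val + 1 = 2 * i.val ∨
      (2 * i.val = 0 ∧ 2 * j.val + 1 = n) ∨ (2 * j.val = 0 ∧ 2 * i.val + 1 = n))
    omega
  exact Nat.card_pos.ne'

lemma natDegree_indepPolyR_cycleGraph {n : ℕ} (hn : 3 ≤ n) :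
    (indepPolyR (cycleGraph n)).natDegree = n / 2 := by
  refine natDegree_eq_of_le_of_coeff_ne_zero (natDegree_le_iff_coeff_eq_zero.2 fun k hk => ?_) ?_
  · have : IsEmpty {s : Finset (Fin n) //
        s.card = k ∧ ∀ u ∈ s, ∀ v ∈ s, ¬ (cycleGraph n).Adj u v} :=
      ⟨fun s => by
        have := two_mul_card_le_of_cycleGraph_indep hn s.2.2
        have := s.2.1
        omega⟩
    simp [coeff_indepPolyR, indepCount]
  · rw [coeff_indepPolyR]
    exact Nat.cast_ne_zero.2 (indepCount_cycleGraph_half_ne_zero hn)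

lemma cycleRoot_angle_mem_Ioo {n i : ℕ} (hi : i ∈ Finset.Icc 1 (n / 2)) :
    (2 * (i : ℝ) - 1) * Real.pi / n ∈ Set.Ioo 0 Real.pi := by
  obtain ⟨h₁, h₂⟩ := Finset.mem_Icc.1 hi
  have h₁' : (1 : ℝ) ≤ i := by exact_mod_cast h₁
  have h₂' : (2 * i : ℝ) ≤ n := by exact_mod_cast (show 2 * i ≤ n by omega)
  have hn : (0 : ℝ) < n := by linarith
  have hpi := Real.pi_pos
  constructor
  · have : (0 : ℝ) < 2 * i - 1 := by linarith
    positivity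
  · rw [div_lt_iff₀ hn]
    nlinarith

lemma one_add_cos_pos {θ : ℝ} (hθ : θ ∈ Set.Ioo 0 Real.pi) : 0 < 1 + Real.cos θ := by
  have := Real.cos_lt_cos_of_nonneg_of_le_pi hθ.1.le le_rfl hθ.2
  rw [Real.cos_pi] at this
  linarith

lemma cycleRoot_ne {n i j : ℕ} (hi : i ∈ Finset.Icc 1 (n / 2)) (hj : j ∈ Finset.Icc 1 (n / 2))
    (hij : i ≠ j) : cycleRoot n i ≠ cycleRoot n j := by
  have hi' := cycleRoot_angle_mem_Ioo hi
  have hj' := cycleRoot_angle_mem_Ioo hj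
  have hn : (n : ℝ) ≠ 0 := by rintro h; simp [h] at hi'
  intro h
  simp only [cycleRoot, neg_inj, one_div, inv_inj, mul_eq_mul_left_iff, add_right_inj,
    OfNat.ofNat_ne_zero, or_false] at h
  have h := Real.injOn_cos (Set.Ioo_subset_Icc_self hi') (Set.Ioo_subset_Icc_self hj') h
  rw [div_left_inj' hn, mul_left_inj' Real.pi_ne_zero] at h
  exact hij (by exact_mod_cast (by linarith : (i : ℝ) = j))

lemma eval_cycleRoot_indepPolyR {n i : ℕ} (hn : 3 ≤ n) (hi : i ∈ Finset.Icc 1 (n / 2)) :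
    (indepPolyR (cycleGraph n)).eval (cycleRoot n i) = 0 := by
  obtain ⟨m, rfl⟩ := Nat.exists_eq_add_of_le' hn
  have hθ := cycleRoot_angle_mem_Ioo hi
  have hpos := one_add_cos_pos hθ
  set θ : ℝ := (2 * (i : ℝ) - 1) * Real.pi / (m + 3 : ℕ) with hθdef
  obtain ⟨φ, hφ⟩ : ∃ φ, θ = 2 * φ := ⟨θ / 2, by ring⟩
  have hsq : 1 + Real.cos θ = 2 * Real.cos φ ^ 2 := by rw [hφ, Real.cos_two_mul]; ring
  have hcos : Real.cos φ ≠ 0 := by rintro h; simp [hsq, h] at hpos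
  have hsin : Real.sin φ ≠ 0 :=
    (Real.sin_pos_of_pos_of_lt_pi (by linarith [hθ.1]) (by linarith [hθ.1, hθ.2])).ne'
  have hx : cycleRoot (m + 3) i * (2 * Real.cos φ) ^ 2 = -1 := by
    rw [cycleRoot, ← hθdef, hsq]
    field_simp
  have hzero : Real.cos ((m + 3) * φ) = 0 := by
    rw [Real.cos_eq_zero_iff]
    refine ⟨i - 1, ?_⟩
    have : φ = θ / 2 := by linarith
    rw [this, hθdef]
    push_cast
    field_simp
    ring
  rw [eval_indepPolyR_cycleGraph]
  have h₁ := pathIndepSum_trig hx 0 (m + 2)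
  have h₂ := pathIndepSum_trig hx 1 m
  have e₁ : ((m + 2 : ℕ) + 2 : ℝ) * φ = (m + 3) * φ + φ := by push_cast; ring
  have e₂ : ((m : ℝ) + 2) * φ = (m + 3) * φ - φ := by ring
  rw [e₁, Real.sin_add, hzero] at h₁
  rw [e₂, Real.sin_sub, hzero] at h₂
  have hne : Real.sin φ * (2 * Real.cos φ) ^ (m + 3) ≠ 0 := by positivity
  refine (mul_eq_zero.1 ?_).resolve_right hne
  linear_combination h₁ - h₂ +
    pathIndepSum (cycleRoot (m + 3) i) 1 m * Real.sin φ * (2 * Real.cos φ) ^ (m + 1) * hx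

theorem cycle_indepPoly_roots (n : ℕ) (hn : 3 ≤ n) :
    (∀ i ∈ Finset.Icc 1 (n / 2), ∀ j ∈ Finset.Icc 1 (n / 2), i ≠ j →
        cycleRoot n i ≠ cycleRoot n j) ∧
    (∀ i ∈ Finset.Icc 1 (n / 2),
        Polynomial.eval (cycleRoot n i) (indepPolyR (SimpleGraph.cycleGraph n)) = 0) ∧
    (indepPolyR (SimpleGraph.cycleGraph n)).natDegree = n / 2 := by
  exact ⟨fun _ hi _ hj hij => cycleRoot_ne hi hj hij,
    fun _ hi => eval_cycleRoot_indepPolyR hn hi, natDegree_indepPolyR_cycleGraph hn⟩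
end
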